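/- For every smooth compactly supported function v : ℂ → ℂ and every C²-smooth φ : ℂ → ℝ with Δ̂φ > 0 everywhere, one has the inequality 2 ∫_ℂ |v|² Δ̂φ dA ≤ ∫_ℂ |∂̄v - v·∂̄φ|² dA. -/

import Mathlib

open MeasureTheory Complex Real Filter Topology

/-- Wirtinger derivative ∂̄ = (∂ₓ + i ∂_y)/2. -/
noncomputable def dbar (f : ℂ → ℂ) (z : ℂ) : ℂ :=
  (fderiv ℝ f z 1 + Complex.I * fderiv ℝ f z Complex.I) / 2

/-- Wirtinger derivative ∂ = (∂ₓ - i ∂_y)/2. -/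
noncomputable def dee (f : ℂ → ℂ) (z : ℂ) : ℂ :=
  (fderiv ℝ f z 1 - Complex.I * fderiv ℝ f z Complex.I) / 2

/-- ∂̄ applied to a real-valued function (viewed as complex-valued). -/
noncomputable def dbarR (φ : ℂ → ℝ) (z : ℂ) : ℂ := dbar (fun w => (φ w : ℂ)) z

/-- ∂ applied to a real-valued function (viewed as complex-valued). -/
noncomputable def deeR (φ : ℂ → ℝ) (z : ℂ) : ℂ := dee (fun w => (φ w : ℂ)) z

/-- Normalized Laplacian Δ̂ = (∂ₓ² + ∂_y²)/4. -/
noncomputable def lapHat (φ : ℂ → ℝ) (z : ℂ) : ℝ :=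
  (fderiv ℝ (fun w => fderiv ℝ φ w 1) z 1 +
   fderiv ℝ (fun w => fderiv ℝ φ w Complex.I) z Complex.I) / 4

/-- `u` solves `∂̄ u = f` in the sense of distributions. -/
def IsDbarSol (u f : ℂ → ℂ) : Prop :=
  ∀ ψ : ℂ → ℂ, ContDiff ℝ (⊤ : ℕ∞) ψ → HasCompactSupport ψ →
    ∫ z : ℂ, f z * ψ z = -∫ z : ℂ, u z * dbar ψ z

/-!
The operator `T = ∂̄ - ∂̄φ` has formal adjoint `T* = -(∂ + ∂φ)`, and `[T*, T] = 2 ∂∂̄φ = 2 Δ̂φ`, so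
`‖T v‖² = 2 ∫ |v|² Δ̂φ + ‖T* v‖²` in `L²` and the last term is nonnegative. Concretely, pointwise
`|∂̄v - v ∂̄φ|² = |∂v + v ∂φ|² + (|∂̄v|² - |∂v|²) - 2 Re (∂φ · ∂̄|v|²)`; integrating by parts, the
bracket has integral zero because `∂` and `∂̄` commute, and moving `∂̄` from `|v|²` onto `∂φ` turns
the last term into `2 ∫ |v|² Δ̂φ`.
-/

open scoped ComplexConjugate

section FDeriv

variable {E F : Type*} [NormedAddCommGroup E] [NormedSpace ℝ E]
  [NormedAddCommGroup F] [NormedSpace ℝ F]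

lemma differentiableAt_fderiv_apply {f : E → F} {x : E} (hf : ContDiffAt ℝ 2 f x) (s : E) :
    DifferentiableAt ℝ (fun y => fderiv ℝ f y s) x :=
  ((hf.fderiv_right (m := 1) (by norm_num)).differentiableAt one_ne_zero).clm_apply
    (differentiableAt_const s)

lemma fderiv_fderiv_apply_comm {f : E → F} {x : E} (hf : ContDiffAt ℝ 2 f x) (s t : E) :
    fderiv ℝ (fun y => fderiv ℝ f y s) x t = fderiv ℝ (fun y => fderiv ℝ f y t) x s := by
  have hf' : DifferentiableAt ℝ (fderiv ℝ f) x :=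
    (hf.fderiv_right (m := 1) (by norm_num)).differentiableAt one_ne_zero
  have hsymm : IsSymmSndFDerivAt ℝ f x := hf.isSymmSndFDerivAt (by simp)
  simpa [fderiv_clm_apply hf' (differentiableAt_const _)] using hsymm t s

lemma fderiv_conj_apply (f : E → ℂ) (x u : E) :
    fderiv ℝ (fun y => conj (f y)) x u = conj (fderiv ℝ f x u) :=
  DFunLike.congr_fun (Complex.conjCLE.comp_fderiv (f := f) (x := x)) u

lemma fderiv_ofReal_apply {φ : E → ℝ} {x : E} (hφ : DifferentiableAt ℝ φ x) (u : E) :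
    fderiv ℝ (fun y => (φ y : ℂ)) x u = fderiv ℝ φ x u :=
  DFunLike.congr_fun (Complex.ofRealCLM.hasFDerivAt.comp x hφ.hasFDerivAt).fderiv u

variable [FiniteDimensional ℝ E] [MeasurableSpace E] [BorelSpace E]

lemma integral_fderiv_apply_eq_zero {μ : Measure E} [μ.IsAddHaarMeasure] {f : E → F} {u : E}
    (hf : Differentiable ℝ f) (hfi : Integrable f μ)
    (hfi' : Integrable (fun x => fderiv ℝ f x u) μ) :
    ∫ x, fderiv ℝ f x u ∂μ = 0 := by
  simpa using integral_smul_fderiv_eq_neg_fderiv_smul_of_integrable (μ := μ) (v := u)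
    (f := fun _ : E => (1 : ℝ)) (g := f) (by simp) (by simpa using hfi') (by simpa using hfi)
    (by fun_prop) (fun x _ => hf x)

end FDeriv

section Integrable

variable {X F : Type*} [TopologicalSpace X] [MeasurableSpace X] [OpensMeasurableSpace X]
  [NormedAddCommGroup F] {μ : Measure X} [IsFiniteMeasureOnCompacts μ]

lemma integrable_norm_sq_of_hasCompactSupport {f : X → F} (hf : Continuous f)
    (hfc : HasCompactSupport f) : Integrable (fun x => ‖f x‖ ^ 2) μ :=
  Continuous.integrable_of_hasCompactSupport (by fun_prop)
    (hfc.comp_left (g := fun y : F => ‖y‖ ^ 2) (by simp))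

end Integrable

section Wirtinger

variable {f g : ℂ → ℂ} {z : ℂ}

lemma dbar_conj (f : ℂ → ℂ) (z : ℂ) : dbar (fun w => conj (f w)) z = conj (dee f z) := by
  simp [dbar, dee, fderiv_conj_apply, map_ofNat]

lemma dee_conj (f : ℂ → ℂ) (z : ℂ) : dee (fun w => conj (f w)) z = conj (dbar f z) := by
  simp [dbar, dee, fderiv_conj_apply, map_ofNat, sub_eq_add_neg]

lemma conj_dbarR (φ : ℂ → ℝ) (z : ℂ) : conj (dbarR φ z) = deeR φ z := by
  simpa only [Complex.conj_ofReal] using! (dee_conj (fun w => (φ w : ℂ)) z).symm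

lemma dbar_mul (hf : DifferentiableAt ℝ f z) (hg : DifferentiableAt ℝ g z) :
    dbar (fun w => f w * g w) z = dbar f z * g z + f z * dbar g z := by
  simp only [dbar, fderiv_fun_mul hf hg, add_apply, smul_apply, smul_eq_mul]
  ring

lemma contDiff_dbar {m n : WithTop ℕ∞} (hf : ContDiff ℝ n f) (hmn : m + 1 ≤ n) :
    ContDiff ℝ m (dbar f) := by
  have hf' : ContDiff ℝ m (fderiv ℝ f) := hf.fderiv_right hmn
  exact ((hf'.clm_apply contDiff_const).add
    (contDiff_const.mul (hf'.clm_apply contDiff_const))).div_const 2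

lemma contDiff_dee {m n : WithTop ℕ∞} (hf : ContDiff ℝ n f) (hmn : m + 1 ≤ n) :
    ContDiff ℝ m (dee f) := by
  have hf' : ContDiff ℝ m (fderiv ℝ f) := hf.fderiv_right hmn
  exact ((hf'.clm_apply contDiff_const).sub
    (contDiff_const.mul (hf'.clm_apply contDiff_const))).div_const 2

lemma contDiff_deeR {m n : WithTop ℕ∞} {φ : ℂ → ℝ} (hφ : ContDiff ℝ n φ) (hmn : m + 1 ≤ n) :
    ContDiff ℝ m (deeR φ) :=
  contDiff_dee (Complex.ofRealCLM.contDiff.comp hφ) hmn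

lemma hasCompactSupport_dbar (hf : HasCompactSupport f) : HasCompactSupport (dbar f) :=
  (hf.fderiv ℝ).comp_left (g := fun L : ℂ →L[ℝ] ℂ => (L 1 + I * L I) / 2) (by simp)

lemma hasCompactSupport_dee (hf : HasCompactSupport f) : HasCompactSupport (dee f) :=
  (hf.fderiv ℝ).comp_left (g := fun L : ℂ →L[ℝ] ℂ => (L 1 - I * L I) / 2) (by simp)

lemma fderiv_dbar_apply (hf : ContDiffAt ℝ 2 f z) (u : ℂ) :
    fderiv ℝ (dbar f) z u =
      (fderiv ℝ (fun w => fderiv ℝ f w 1) z u +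
        I * fderiv ℝ (fun w => fderiv ℝ f w I) z u) / 2 := by
  have hx := (differentiableAt_fderiv_apply hf 1).hasFDerivAt
  have hy := (differentiableAt_fderiv_apply hf I).hasFDerivAt
  have h : HasFDerivAt (dbar f) _ z := (hx.add (hy.const_mul I)).mul_const 2⁻¹
  simp only [h.fderiv, smul_add, add_apply, smul_apply, smul_eq_mul]
  ring

lemma fderiv_dee_apply (hf : ContDiffAt ℝ 2 f z) (u : ℂ) :
    fderiv ℝ (dee f) z u =
      (fderiv ℝ (fun w => fderiv ℝ f w 1) z u -
        I * fderiv ℝ (fun w => fderiv ℝ f w I) z u) / 2 := by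
  have hx := (differentiableAt_fderiv_apply hf 1).hasFDerivAt
  have hy := (differentiableAt_fderiv_apply hf I).hasFDerivAt
  have h : HasFDerivAt (dee f) _ z := (hx.sub (hy.const_mul I)).mul_const 2⁻¹
  simp only [h.fderiv, smul_apply, sub_apply, smul_eq_mul]
  ring

lemma dbar_dee (hf : ContDiffAt ℝ 2 f z) :
    dbar (dee f) z =
      (fderiv ℝ (fun w => fderiv ℝ f w 1) z 1 + fderiv ℝ (fun w => fderiv ℝ f w I) z I) / 4 := by
  rw [dbar, fderiv_dee_apply hf, fderiv_dee_apply hf, fderiv_fderiv_apply_comm hf 1 I]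
  linear_combination (-fderiv ℝ (fun w => fderiv ℝ f w I) z I / 4) * I_sq

lemma dee_dbar (hf : ContDiffAt ℝ 2 f z) :
    dee (dbar f) z =
      (fderiv ℝ (fun w => fderiv ℝ f w 1) z 1 + fderiv ℝ (fun w => fderiv ℝ f w I) z I) / 4 := by
  rw [dee, fderiv_dbar_apply hf, fderiv_dbar_apply hf, fderiv_fderiv_apply_comm hf 1 I]
  linear_combination (-fderiv ℝ (fun w => fderiv ℝ f w I) z I / 4) * I_sq

lemma dbar_deeR {φ : ℂ → ℝ} (hφ : ContDiff ℝ 2 φ) (z : ℂ) : dbar (deeR φ) z = lapHat φ z := by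
  have hφ' : ContDiff ℝ 2 (fun w => (φ w : ℂ)) := Complex.ofRealCLM.contDiff.comp hφ
  have hderiv (s : ℂ) :
      (fun w => fderiv ℝ (fun w => (φ w : ℂ)) w s) = fun w => ((fderiv ℝ φ w s : ℝ) : ℂ) :=
    funext fun w => fderiv_ofReal_apply (hφ.differentiable two_ne_zero w) s
  have hderiv' (s : ℂ) : DifferentiableAt ℝ (fun w => fderiv ℝ φ w s) z :=
    differentiableAt_fderiv_apply hφ.contDiffAt s
  calc dbar (deeR φ) z
    _ = (fderiv ℝ (fun w => fderiv ℝ (fun w => (φ w : ℂ)) w 1) z 1 +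
          fderiv ℝ (fun w => fderiv ℝ (fun w => (φ w : ℂ)) w I) z I) / 4 :=
      dbar_dee hφ'.contDiffAt
    _ = lapHat φ z := by
      simp only [hderiv, fderiv_ofReal_apply (hderiv' _), lapHat]
      push_cast
      rfl

end Wirtinger

section IntegrationByParts

variable {f g : ℂ → ℂ}

lemma integral_dbar_eq_zero (hf : ContDiff ℝ 1 f) (hfc : HasCompactSupport f) :
    ∫ z, dbar f z = 0 := by
  have hfd : Differentiable ℝ f := hf.differentiable one_ne_zero
  have hfi : Integrable f := hf.continuous.integrable_of_hasCompactSupport hfc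
  have hfi' (u : ℂ) : Integrable (fun z => fderiv ℝ f z u) :=
    ((hf.continuous_fderiv one_ne_zero).clm_apply
      continuous_const).integrable_of_hasCompactSupport (hfc.fderiv_apply ℝ u)
  simp only [dbar, integral_div]
  rw [integral_add (hfi' 1) ((hfi' I).const_mul I), integral_const_mul,
    integral_fderiv_apply_eq_zero hfd hfi (hfi' 1),
    integral_fderiv_apply_eq_zero hfd hfi (hfi' I), mul_zero, add_zero, zero_div]

theorem integral_mul_dbar_eq_neg_dbar_mul (hf : ContDiff ℝ 1 f) (hg : ContDiff ℝ 1 g)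
    (hfc : HasCompactSupport f) : ∫ z, f z * dbar g z = -∫ z, dbar f z * g z := by
  have hfg : Integrable (fun z => f z * dbar g z) :=
    (hf.continuous.mul (contDiff_dbar (m := 0) hg (by simp)).continuous)
      |>.integrable_of_hasCompactSupport hfc.mul_right
  have hfg' : Integrable (fun z => dbar f z * g z) :=
    ((contDiff_dbar (m := 0) hf (by simp)).continuous.mul hg.continuous)
      |>.integrable_of_hasCompactSupport (hasCompactSupport_dbar hfc).mul_right
  rw [eq_neg_iff_add_eq_zero, add_comm, ← integral_add hfg' hfg]
  calc ∫ z, (dbar f z * g z + f z * dbar g z)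
    _ = ∫ z, dbar (fun w => f w * g w) z := by
      simp only [dbar_mul (hf.differentiable one_ne_zero _) (hg.differentiable one_ne_zero _)]
    _ = 0 := integral_dbar_eq_zero (hf.mul hg) hfc.mul_right

theorem integral_mul_dee_eq_neg_dee_mul (hf : ContDiff ℝ 1 f) (hg : ContDiff ℝ 1 g)
    (hfc : HasCompactSupport f) : ∫ z, f z * dee g z = -∫ z, dee f z * g z := by
  have hconj := integral_mul_dbar_eq_neg_dbar_mul (Complex.conjCLE.contDiff.comp hf)
    (Complex.conjCLE.contDiff.comp hg) (hfc.comp_left (map_zero Complex.conjCLE))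
  simp only [Function.comp_def, Complex.conjCLE_apply, dbar_conj, ← map_mul, integral_conj,
    ← map_neg] at hconj
  exact (starRingEnd ℂ).injective hconj

theorem integral_dbar_mul_dee_eq_dee_mul_dbar (hf : ContDiff ℝ 2 f) (hg : ContDiff ℝ 1 g)
    (hfc : HasCompactSupport f) : ∫ z, dbar f z * dee g z = ∫ z, dee f z * dbar g z := by
  calc ∫ z, dbar f z * dee g z
    _ = -∫ z, dee (dbar f) z * g z :=
      integral_mul_dee_eq_neg_dee_mul (contDiff_dbar hf (by norm_num)) hg
        (hasCompactSupport_dbar hfc)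
    _ = -∫ z, dbar (dee f) z * g z := by simp only [dee_dbar hf.contDiffAt, dbar_dee hf.contDiffAt]
    _ = ∫ z, dee f z * dbar g z :=
      (integral_mul_dbar_eq_neg_dbar_mul (contDiff_dee hf (by norm_num)) hg
        (hasCompactSupport_dee hfc)).symm

theorem integral_norm_sq_dbar_eq_integral_norm_sq_dee (hf : ContDiff ℝ 2 f)
    (hfc : HasCompactSupport f) : ∫ z, ‖dbar f z‖ ^ 2 = ∫ z, ‖dee f z‖ ^ 2 := by
  have hf' : ContDiff ℝ 1 (fun z => conj (f z)) :=
    Complex.conjCLE.contDiff.comp (hf.of_le one_le_two)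
  have h := integral_dbar_mul_dee_eq_dee_mul_dbar hf hf' hfc
  simp only [dee_conj, dbar_conj, Complex.mul_conj'] at h
  exact_mod_cast h

lemma integrable_dbar_mul_deeR {u : ℂ → ℂ} {φ : ℂ → ℝ} (hu : ContDiff ℝ 1 u)
    (huc : HasCompactSupport u) (hφ : ContDiff ℝ 1 φ) :
    Integrable (fun z => dbar u z * deeR φ z) :=
  ((contDiff_dbar (m := 0) hu (by simp)).continuous.mul
    (contDiff_deeR (m := 0) hφ (by simp)).continuous).integrable_of_hasCompactSupport
      (hasCompactSupport_dbar huc).mul_right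

theorem integral_dbar_mul_deeR_eq_neg_mul_lapHat {u : ℂ → ℂ} {φ : ℂ → ℝ} (hu : ContDiff ℝ 1 u)
    (huc : HasCompactSupport u) (hφ : ContDiff ℝ 2 φ) :
    ∫ z, dbar u z * deeR φ z = -∫ z, u z * lapHat φ z := by
  simp only [← dbar_deeR hφ]
  rw [integral_mul_dbar_eq_neg_dbar_mul hu (contDiff_deeR hφ (by norm_num)) huc, neg_neg]

end IntegrationByParts

section WeightedIdentity

variable {v : ℂ → ℂ} {φ : ℂ → ℝ}

lemma contDiff_mul_conj_self {n : WithTop ℕ∞} (hv : ContDiff ℝ n v) :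
    ContDiff ℝ n (fun z => v z * conj (v z)) :=
  hv.mul (Complex.conjCLE.contDiff.comp hv)

lemma dbar_mul_conj_self {z : ℂ} (hv : DifferentiableAt ℝ v z) :
    dbar (fun w => v w * conj (v w)) z = dbar v z * conj (v z) + v z * conj (dee v z) := by
  have hv' : DifferentiableAt ℝ (fun w => conj (v w)) z :=
    Complex.conjCLE.differentiableAt.comp z hv
  rw [dbar_mul hv hv', dbar_conj]

lemma norm_sq_dbar_sub_mul_dbarR {z : ℂ} (hv : DifferentiableAt ℝ v z) :
    ‖dbar v z - v z * dbarR φ z‖ ^ 2 =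
      ‖dee v z + v z * deeR φ z‖ ^ 2 + (‖dbar v z‖ ^ 2 - ‖dee v z‖ ^ 2)
        - 2 * (dbar (fun w => v w * conj (v w)) z * deeR φ z).re := by
  rw [dbar_mul_conj_self hv, ← conj_dbarR]
  simp only [← Complex.normSq_eq_norm_sq, Complex.normSq_apply]
  simp only [sub_re, mul_re, sub_im, mul_im, add_re, conj_re, conj_im, mul_neg, sub_neg_eq_add,
    add_im]
  ring

theorem integral_re_dbar_mul_conj_self_mul_deeR (hv : ContDiff ℝ 1 v) (hvc : HasCompactSupport v)
    (hφ : ContDiff ℝ 2 φ) :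
    ∫ z, (dbar (fun w => v w * conj (v w)) z * deeR φ z).re = -∫ z, ‖v z‖ ^ 2 * lapHat φ z := by
  have hu : ContDiff ℝ 1 (fun z => v z * conj (v z)) := contDiff_mul_conj_self hv
  have huc : HasCompactSupport (fun z => v z * conj (v z)) := hvc.mul_right
  calc ∫ z, (dbar (fun w => v w * conj (v w)) z * deeR φ z).re
    _ = (∫ z, dbar (fun w => v w * conj (v w)) z * deeR φ z).re :=
      Complex.reCLM.integral_comp_comm (integrable_dbar_mul_deeR hu huc (hφ.of_le one_le_two))
    _ = (-∫ z, ((‖v z‖ ^ 2 * lapHat φ z : ℝ) : ℂ)).re := by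
      rw [integral_dbar_mul_deeR_eq_neg_mul_lapHat hu huc hφ]
      simp only [Complex.mul_conj', Complex.ofReal_mul, Complex.ofReal_pow]
    _ = -∫ z, ‖v z‖ ^ 2 * lapHat φ z := by
      rw [integral_complex_ofReal, ← Complex.ofReal_neg, Complex.ofReal_re]

theorem integral_norm_sq_dbar_sub_mul_dbarR (hv : ContDiff ℝ 2 v) (hvc : HasCompactSupport v)
    (hφ : ContDiff ℝ 2 φ) :
    ∫ z, ‖dbar v z - v z * dbarR φ z‖ ^ 2 =
      2 * (∫ z, ‖v z‖ ^ 2 * lapHat φ z) + ∫ z, ‖dee v z + v z * deeR φ z‖ ^ 2 := by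
  have hdbar : Continuous (dbar v) := (contDiff_dbar (m := 0) hv (by simp)).continuous
  have hdee : Continuous (dee v) := (contDiff_dee (m := 0) hv (by simp)).continuous
  have hsq : Integrable (fun z => ‖dee v z + v z * deeR φ z‖ ^ 2) :=
    integrable_norm_sq_of_hasCompactSupport
      (hdee.add (hv.continuous.mul (contDiff_deeR (m := 0) hφ (by simp)).continuous))
      ((hasCompactSupport_dee hvc).add hvc.mul_right)
  have hdbar_sq : Integrable (fun z => ‖dbar v z‖ ^ 2) :=
    integrable_norm_sq_of_hasCompactSupport hdbar (hasCompactSupport_dbar hvc)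
  have hdee_sq : Integrable (fun z => ‖dee v z‖ ^ 2) :=
    integrable_norm_sq_of_hasCompactSupport hdee (hasCompactSupport_dee hvc)
  have hcross : Integrable (fun z => (dbar (fun w => v w * conj (v w)) z * deeR φ z).re) :=
    (integrable_dbar_mul_deeR (contDiff_mul_conj_self (hv.of_le one_le_two)) hvc.mul_right
      (hφ.of_le one_le_two)).re
  have hdiff : Integrable (fun z => ‖dbar v z‖ ^ 2 - ‖dee v z‖ ^ 2) := hdbar_sq.sub hdee_sq
  have hsum : Integrable (fun z => ‖dee v z + v z * deeR φ z‖ ^ 2 +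
      (‖dbar v z‖ ^ 2 - ‖dee v z‖ ^ 2)) := hsq.add hdiff
  simp only [norm_sq_dbar_sub_mul_dbarR (hv.differentiable two_ne_zero _)]
  rw [integral_sub hsum (hcross.const_mul 2), integral_add hsq hdiff,
    integral_sub hdbar_sq hdee_sq, integral_norm_sq_dbar_eq_integral_norm_sq_dee hv hvc,
    integral_const_mul, integral_re_dbar_mul_conj_self_mul_deeR (hv.of_le one_le_two) hvc hφ]
  ring

end WeightedIdentity

theorem stmt2_general (v : ℂ → ℂ) (hv : ContDiff ℝ 2 v) (hvc : HasCompactSupport v)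
    (φ : ℂ → ℝ) (hφ : ContDiff ℝ 2 φ) :
    2 * (∫ z : ℂ, ‖v z‖ ^ 2 * lapHat φ z) ≤
      ∫ z : ℂ, ‖dbar v z - v z * dbarR φ z‖ ^ 2 := by
  rw [integral_norm_sq_dbar_sub_mul_dbarR hv hvc hφ]
  exact le_add_of_nonneg_right (integral_nonneg fun z => sq_nonneg _)

theorem stmt2 (v : ℂ → ℂ) (hv : ContDiff ℝ (⊤ : ℕ∞) v) (hvc : HasCompactSupport v)
    (φ : ℂ → ℝ) (hφ : ContDiff ℝ 2 φ) (hpos : ∀ z, 0 < lapHat φ z) :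
    2 * (∫ z : ℂ, ‖v z‖ ^ 2 * lapHat φ z) ≤
      ∫ z : ℂ, ‖dbar v z - v z * dbarR φ z‖ ^ 2 :=
  stmt2_general v (contDiff_infty.1 hv 2) hvc φ hφ
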